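/- Let K be a field of characteristic 0. Let f and g be nonconstant, relatively prime polynomials in K[t], and set A = f² − g², B = 2fg, C = f² + g². Let w ∈ K[t] be a nonzero polynomial. Then the only solutions in positive integers (x, y, z) of the equation (wA)^x + (wB)^y = (wC)^z are (x, y, z) = (2, 2, 2) and (x, y, z) = (2, 1, 1); moreover, (2, 1, 1) is a solution if and only if w is a constant polynomial and w·(f + g)² = 1 (equivalently, √w ∈ K and f = −g ± 1/√w). -/

import Mathlib

open Polynomial

/-!
Over an algebraically closed field, replacing `C` by `iC` turns a Pythagorean triple into a coprime
solution of `P² + Q² + R² = 0`, in which the three entries play the same role. Consider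
`a (wP)^x + b (wQ)^y + c (wR)^z = 0` with constants `a`, `b`, `c` and, say, `x ≤ y ≤ z`.

* If `x < y`, then `w` divides a power of `P`, so Mason–Stothers applied after division by
  `w ^ x` bounds `y deg Q` and `z deg R` by `deg P + deg Q + deg R`. As the largest degree is
  attained twice, this forces `x = 1` and `y = 2`. If `z = 2`, factoring `b Q² + c R²`
  excludes this; if `z > 2`, a congruence modulo a factor `P ± iQ` of `-R²` does.
* If `x = y < z`, then `R ^ (x + 1)` divides `a P ^ x + b Q ^ x`. Since `R² = -(P + iQ)(P - iQ)` has
  coprime factors, expanding in powers of each of them leaves only `x = 1` and `z = 2`.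
* If `x = y = z`, Fermat's last theorem for polynomials gives `x ≤ 2`.
-/

section Algebra

theorem mul_mul_dvd_mul_pow_of_dvd_pow {M : Type*} [CommMonoid M] {w T P Q R β γ : M}
    {x : ℕ} (hβ : IsUnit β) (hγ : IsUnit γ) (hT : T ∣ P ^ x) (hw : w ∣ P ^ x) (y z k : ℕ) :
    T * (β * Q ^ y) * (γ * w ^ k * R ^ z) ∣ (P * Q * R) ^ (x + y + (x * k + z)) := by
  have hP : P ∣ P * Q * R := (dvd_mul_right P Q).mul_right R
  have hQ : Q ∣ P * Q * R := (dvd_mul_left Q P).mul_right R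
  simp only [pow_add, pow_mul]
  refine mul_dvd_mul (mul_dvd_mul (hT.trans (pow_dvd_pow_of_dvd hP x)) ?_) (mul_dvd_mul ?_ ?_)
  · exact hβ.mul_left_dvd.mpr (pow_dvd_pow_of_dvd hQ y)
  · exact hγ.mul_left_dvd.mpr (pow_dvd_pow_of_dvd (hw.trans (pow_dvd_pow_of_dvd hP x)) k)
  · exact pow_dvd_pow_of_dvd (dvd_mul_left R _) z

variable {S : Type*} [CommRing S]

theorem weighted_eq_zero_of_mul_pow_eq_zero [IsDomain S] {w α β γ P Q R : S} {x m k : ℕ}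
    (hw : w ≠ 0)
    (he : α * (w * P) ^ x + β * (w * Q) ^ (x + m) + γ * (w * R) ^ (x + m + k) = 0) :
    α * P ^ x + w ^ m * (β * Q ^ (x + m) + γ * w ^ k * R ^ (x + m + k)) = 0 := by
  apply mul_left_cancel₀ (pow_ne_zero x hw)
  linear_combination he

theorem isCoprime_two_mul_mul_sq_sub_sq {f g : S} (h2 : IsUnit (2 : S)) (h : IsCoprime f g) :
    IsCoprime (2 * f * g) (f ^ 2 - g ^ 2) := by
  have hf : IsCoprime f (f ^ 2 - g ^ 2) := by
    have := (h.pow_right (n := 2)).neg_right.add_mul_left_right f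
    rwa [show -g ^ 2 + f * f = f ^ 2 - g ^ 2 by ring] at this
  have hg : IsCoprime g (f ^ 2 - g ^ 2) := by
    have := (h.symm.pow_right (n := 2)).add_mul_left_right (-g)
    rwa [show f ^ 2 + g * -g = f ^ 2 - g ^ 2 by ring] at this
  rw [mul_assoc, isCoprime_mul_unit_left_left h2]
  exact hf.mul_left hg

end Algebra

section PolynomialEquations

variable {L : Type*} [Field L] {a b : L} {P Q : L[X]}

theorem natDegree_eq_zero_of_isUnit_add_of_isUnit_sub [NeZero (2 : L)]
    (hadd : IsUnit (P + Q)) (hsub : IsUnit (P - Q)) : P.natDegree = 0 := by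
  have h := natDegree_add_le (P + Q) (P - Q)
  rwa [natDegree_eq_zero_of_isUnit hadd, natDegree_eq_zero_of_isUnit hsub, max_self,
    show P + Q + (P - Q) = C 2 * P by rw [C_ofNat]; ring, natDegree_C_mul two_ne_zero,
    Nat.le_zero] at h

theorem natDegree_eq_zero_of_isUnit_C_mul_sq_add_C_mul_sq [IsAlgClosed L] [NeZero (2 : L)]
    (ha : a ≠ 0) (h : IsUnit (C a * P ^ 2 + C b * Q ^ 2)) : P.natDegree = 0 := by
  obtain ⟨s, rfl⟩ := IsAlgClosed.exists_pow_nat_eq a two_pos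
  obtain ⟨t, ht⟩ := IsAlgClosed.exists_pow_nat_eq (-b) two_pos
  have hfactor : C (s ^ 2) * P ^ 2 + C b * Q ^ 2 = (C s * P + C t * Q) * (C s * P - C t * Q) := by
    rw [← neg_neg b, ← ht]
    simp only [C_pow, C_neg]
    ring
  rw [hfactor, IsUnit.mul_iff] at h
  simpa only [natDegree_C_mul (pow_ne_zero_iff two_ne_zero |>.mp ha)]
    using natDegree_eq_zero_of_isUnit_add_of_isUnit_sub h.1 h.2

theorem isUnit_of_sq_dvd_add_pow_add_sub_pow [CharZero L] {E H : L[X]} {n : ℕ} (ha : a ≠ 0)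
    (hn : n ≠ 0) (hEH : IsCoprime E H) (hH : H ≠ 0)
    (h : H ^ 2 ∣ C a * (E + H) ^ n + C b * (E - H) ^ n) : IsUnit H := by
  obtain ⟨u, hu⟩ := sq_dvd_add_pow_sub_sub H E n
  obtain ⟨v, hv⟩ := sq_dvd_add_pow_sub_sub (-H) E n
  obtain ⟨s, hs⟩ := h
  have hexp : C (a + b) * E ^ n + H * (C ((a - b) * n) * E ^ (n - 1)) =
      H ^ 2 * (s - C a * u - C b * v) := by
    simp only [C_add, C_sub, C_mul, map_natCast]
    linear_combination hs - C a * hu - C b * hv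
  have isUnit_of_dvd {d : L} {m : ℕ} (hd : d ≠ 0) (hdvd : H ∣ C d * E ^ m) : IsUnit H :=
    isUnit_of_dvd_unit (hEH.symm.pow_right.dvd_of_dvd_mul_right hdvd) (hd.isUnit.map C)
  by_cases hab : a + b = 0
  · refine isUnit_of_dvd (d := (a - b) * n) (m := n - 1) ?_ ⟨s - C a * u - C b * v, ?_⟩
    · rw [eq_neg_of_add_eq_zero_right hab, sub_neg_eq_add, ← two_mul]
      exact mul_ne_zero (mul_ne_zero two_ne_zero ha) (Nat.cast_ne_zero.mpr hn)
    · rw [hab, C_0] at hexp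
      exact mul_left_cancel₀ hH (by linear_combination hexp)
  · exact isUnit_of_dvd (m := n) hab ⟨H * (s - C a * u - C b * v) - C ((a - b) * n) * E ^ (n - 1),
      by linear_combination hexp⟩

theorem natDegree_lt_of_add_eq_zero_of_dvd_pow [CharZero L] {A B D N : L[X]} {n : ℕ}
    (hA : A ≠ 0) (hB : 0 < B.natDegree) (hD : D ≠ 0) (hN : N ≠ 0) (hAB : IsCoprime A B)
    (hsum : A + B + D = 0) (hdvd : A * B * D ∣ N ^ n) :
    B.natDegree < N.natDegree ∧ D.natDegree < N.natDegree := by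
  classical
  have hB' : B ≠ 0 := ne_zero_of_natDegree_gt hB
  have hrad : UniqueFactorizationMonoid.radical (A * B * D) ∣ N :=
    (UniqueFactorizationMonoid.exists_dvd_pow_iff_radical_dvd
      (mul_ne_zero (mul_ne_zero hA hB') hD)).mp ⟨n, hdvd⟩
  have hdeg := natDegree_le_of_dvd hrad hN
  rcases Polynomial.abc hA hB' hD hAB hsum with ⟨-, h₁, h₂⟩ | ⟨-, h, -⟩
  · exact ⟨h₁.trans hdeg, h₂.trans hdeg⟩
  · exact absurd (derivative_eq_zero.mp h) hB.ne'

theorem mul_natDegree_lt_of_weighted_eq_zero [CharZero L] {R w : L[X]} {c : L} {x y z m k : ℕ}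
    (hPQ : IsCoprime P Q) (hP : P ≠ 0) (hQ : 0 < Q.natDegree) (hR : R ≠ 0) (hw : w ≠ 0)
    (ha : a ≠ 0) (hb : b ≠ 0) (hc : c ≠ 0) (hy : y ≠ 0) (hm : m ≠ 0)
    (he : C a * P ^ x + w ^ m * (C b * Q ^ y + C c * w ^ k * R ^ z) = 0) :
    y * Q.natDegree < P.natDegree + Q.natDegree + R.natDegree ∧
      z * R.natDegree < P.natDegree + Q.natDegree + R.natDegree := by
  have hQ' : Q ≠ 0 := ne_zero_of_natDegree_gt hQ
  have hca : IsUnit (C a) := ha.isUnit.map C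
  set T := -(C b * Q ^ y + C c * w ^ k * R ^ z) with hT
  have hPT : C a * P ^ x = w ^ m * T := by linear_combination he
  have hTP : T ∣ P ^ x := hca.dvd_mul_left.mp (hPT ▸ dvd_mul_left ..)
  have hwP : w ∣ P ^ x := hca.dvd_mul_left.mp (hPT ▸ (dvd_pow_self w hm).mul_right T)
  have hcop : IsCoprime T (C b * Q ^ y) :=
    (isCoprime_mul_unit_left_right (hb.isUnit.map C) _ _).mpr
      (hPQ.pow_left.of_isCoprime_of_dvd_left hTP).pow_right
  have hdvd := mul_mul_dvd_mul_pow_of_dvd_pow (Q := Q) (R := R) (hb.isUnit.map C)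
    (hc.isUnit.map C) hTP hwP y z k
  have hcw : C c * w ^ k ≠ 0 := mul_ne_zero (C_ne_zero.mpr hc) (pow_ne_zero k hw)
  have hdegQ : (C b * Q ^ y).natDegree = y * Q.natDegree := by
    rw [natDegree_C_mul hb, natDegree_pow]
  have hdegR : z * R.natDegree ≤ (C c * w ^ k * R ^ z).natDegree := by
    rw [natDegree_mul hcw (pow_ne_zero z hR), natDegree_pow]
    exact Nat.le_add_left ..
  have hT0 : T ≠ 0 := fun h => by
    rw [h, mul_zero] at hPT
    exact mul_ne_zero hca.ne_zero (pow_ne_zero x hP) hPT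
  rw [← natDegree_mul hP hQ', ← natDegree_mul (mul_ne_zero hP hQ') hR, ← hdegQ]
  have hlt := natDegree_lt_of_add_eq_zero_of_dvd_pow hT0
    (hdegQ ▸ Nat.mul_pos (Nat.pos_of_ne_zero hy) hQ) (mul_ne_zero hcw (pow_ne_zero z hR))
    (mul_ne_zero (mul_ne_zero hP hQ') hR) hcop (by rw [hT]; ring) hdvd
  exact ⟨hlt.1, hdegR.trans_lt hlt.2⟩

theorem two_mul_natDegree_eq_of_weighted_eq_zero {R w : L[X]} {c : L} {k : ℕ}
    (hP : 0 < P.natDegree) (hQP : Q.natDegree = P.natDegree) (hR : R ≠ 0) (hw : w ≠ 0)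
    (ha : a ≠ 0) (hb : b ≠ 0) (hc : c ≠ 0)
    (he : C a * P + w * (C b * Q ^ 2 + C c * w ^ k * R ^ (k + 2)) = 0) :
    2 * P.natDegree = k * w.natDegree + (k + 2) * R.natDegree := by
  have hQ : Q ≠ 0 := ne_zero_of_natDegree_gt (hQP ▸ hP)
  have hdegP : (C a * P).natDegree = P.natDegree := natDegree_C_mul ha
  have hdegQ : (C b * (w * Q ^ 2)).natDegree = w.natDegree + 2 * P.natDegree := by
    rw [natDegree_C_mul hb, natDegree_mul hw (pow_ne_zero 2 hQ), natDegree_pow, hQP]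
  have hdegR : (C c * (w ^ (k + 1) * R ^ (k + 2))).natDegree =
      (k + 1) * w.natDegree + (k + 2) * R.natDegree := by
    rw [natDegree_C_mul hc, natDegree_mul (pow_ne_zero _ hw) (pow_ne_zero _ hR), natDegree_pow,
      natDegree_pow]
  have hdeg : (C b * (w * Q ^ 2) + C a * P).natDegree = w.natDegree + 2 * P.natDegree := by
    rw [natDegree_add_eq_left_of_natDegree_lt (by omega), hdegQ]
  rw [show C b * (w * Q ^ 2) + C a * P = -(C c * (w ^ (k + 1) * R ^ (k + 2))) by
    linear_combination he, natDegree_neg, hdegR] at hdeg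
  linarith

theorem isUnit_of_sq_eq_neg_four_mul [CharZero L] {E H R s v : L[X]} (ha : a ≠ 0) (hR : R ≠ 0)
    (hEH : R ^ 2 = -(4 * E * H)) (hv : v * H = C a)
    (he : C a * (E + H) - v * (E - H) ^ 2 = R ^ 3 * s) : IsUnit R := by
  have hH : IsUnit H := isUnit_of_dvd_unit (Dvd.intro_left _ hv) (ha.isUnit.map C)
  have hcancel : C a * (E - 3 * H) = R * (4 * H ^ 2 * s) :=
    mul_left_cancel₀ (pow_ne_zero 2 hR) (by
      linear_combination 4 * H ^ 2 * he + C a * (E - 3 * H) * hEH + 4 * H * (E - H) ^ 2 * hv)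
  have hdvd : R ∣ C (12 * a) * H ^ 2 := by
    refine ⟨-C a * R - 16 * H ^ 3 * s, ?_⟩
    rw [C_mul, C_ofNat]
    linear_combination C a * hEH - 4 * H * hcancel
  exact isUnit_of_dvd_unit hdvd
    (((mul_ne_zero (OfNat.ofNat_ne_zero 12) ha).isUnit.map C).mul (hH.pow 2))

end PolynomialEquations

/-- A nonconstant coprime polynomial solution of `P² + Q² + R² = 0`. It stands for a primitive
Pythagorean triple, in the form `(2fg, f² - g², i(f² + g²))`; signs being equal, the three entries
can be permuted. Only one coprimality and one nonconstancy are required, since over an algebraically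
closed field the others follow. -/
structure IsNullTriple {L : Type*} [Field L] (P Q R : L[X]) : Prop where
  sq_add_sq_add_sq : P ^ 2 + Q ^ 2 + R ^ 2 = 0
  isCoprime : IsCoprime P Q
  natDegree_pos : 0 < P.natDegree

namespace IsNullTriple

variable {L : Type*} [Field L] {P Q R w : L[X]} {a b c : L}

theorem ne_zero (h : IsNullTriple P Q R) : P ≠ 0 := ne_zero_of_natDegree_gt h.natDegree_pos

theorem not_isUnit (h : IsNullTriple P Q R) : ¬IsUnit P :=
  not_isUnit_of_natDegree_pos P h.natDegree_pos

theorem natDegree_le_max (h : IsNullTriple P Q R) :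
    P.natDegree ≤ max Q.natDegree R.natDegree := by
  have hP : P ^ 2 = -(Q ^ 2 + R ^ 2) := by linear_combination h.sq_add_sq_add_sq
  have hdeg := natDegree_add_le (Q ^ 2) (R ^ 2)
  rw [← natDegree_neg, ← hP] at hdeg
  simp only [natDegree_pow] at hdeg
  omega

variable [CharZero L] [IsAlgClosed L]

theorem swap (h : IsNullTriple P Q R) : IsNullTriple Q P R where
  sq_add_sq_add_sq := by linear_combination h.sq_add_sq_add_sq
  isCoprime := h.isCoprime.symm
  natDegree_pos := by
    by_contra hQ
    have hQ' : IsUnit Q := by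
      rw [eq_C_of_natDegree_eq_zero (Nat.eq_zero_of_not_pos hQ)]
      refine isUnit_C.mpr (IsUnit.mk0 _ fun h0 => h.not_isUnit ?_)
      rw [← isCoprime_zero_right, ← C_0, ← h0,
        ← eq_C_of_natDegree_eq_zero (Nat.eq_zero_of_not_pos hQ)]
      exact h.isCoprime
    have hPR : C 1 * P ^ 2 + C 1 * R ^ 2 = -Q ^ 2 := by
      rw [C_1]
      linear_combination h.sq_add_sq_add_sq
    exact h.natDegree_pos.ne' (natDegree_eq_zero_of_isUnit_C_mul_sq_add_C_mul_sq
      one_ne_zero (hPR ▸ (hQ'.pow 2).neg))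

theorem rotate (h : IsNullTriple P Q R) : IsNullTriple Q R P where
  sq_add_sq_add_sq := by linear_combination h.sq_add_sq_add_sq
  isCoprime := by
    have hQR := (h.isCoprime.symm.pow_right (n := 2)).neg_right.add_mul_left_right (-Q)
    rw [show -P ^ 2 + Q * -Q = R ^ 2 by linear_combination -h.sq_add_sq_add_sq] at hQR
    exact (IsCoprime.pow_right_iff two_pos).mp hQR
  natDegree_pos := h.swap.natDegree_pos

theorem exists_factors (h : IsNullTriple P Q R) :
    ∃ (i : L) (E H : L[X]), i ^ 2 = -1 ∧ P = E + H ∧ Q = C i * (E - H) ∧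
      R ^ 2 = -(4 * E * H) ∧ IsCoprime E H ∧ E ≠ 0 ∧ H ≠ 0 := by
  obtain ⟨i, hi⟩ := IsAlgClosed.exists_pow_nat_eq (-1 : L) two_pos
  have hCi : (C i : L[X]) ^ 2 = -1 := by rw [← C_pow, hi, C_neg, C_1]
  have hhalf : (C 2⁻¹ : L[X]) * 2 = 1 := by
    rw [← C_ofNat, ← C_mul, inv_mul_cancel₀ two_ne_zero, C_1]
  obtain ⟨E, hE⟩ : ∃ E, E = C 2⁻¹ * (P - C i * Q) := ⟨_, rfl⟩
  obtain ⟨H, hH⟩ : ∃ H, H = C 2⁻¹ * (P + C i * Q) := ⟨_, rfl⟩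
  have hP : P = E + H := by linear_combination -P * hhalf - hE - hH
  have hQ : Q = C i * (E - H) := by
    linear_combination -Q * hhalf + C i * (hH - hE) + 2 * C 2⁻¹ * Q * hCi
  have hR : R ^ 2 = -(4 * E * H) := by
    have hnull := h.sq_add_sq_add_sq
    rw [hP, hQ] at hnull
    linear_combination hnull - (E - H) ^ 2 * hCi
  have hEH : 4 * E * H ≠ 0 := neg_ne_zero.mp (hR ▸ pow_ne_zero 2 h.rotate.rotate.ne_zero)
  refine ⟨i, E, H, hi, hP, hQ, hR, ?_, right_ne_zero_of_mul (left_ne_zero_of_mul hEH),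
    right_ne_zero_of_mul hEH⟩
  obtain ⟨u, v, huv⟩ := h.isCoprime
  rw [hP, hQ] at huv
  exact ⟨u + v * C i, u - v * C i, by linear_combination huv⟩

theorem not_dvd_add (h : IsNullTriple P Q R) : ¬R ∣ P + Q := by
  rintro ⟨s, hs⟩
  have hdvd : R ∣ 2 * P * Q :=
    ⟨R * s ^ 2 + R, by linear_combination (P + Q + R * s) * hs - h.sq_add_sq_add_sq⟩
  have h2 : IsUnit (2 : L[X]) := by
    rw [← C_ofNat]
    exact two_ne_zero.isUnit.map C
  have hcop : IsCoprime R (2 * P * Q) := by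
    rw [mul_assoc, isCoprime_mul_unit_left_right h2]
    exact h.rotate.rotate.isCoprime.mul_right h.rotate.isCoprime.symm
  exact h.rotate.rotate.not_isUnit (hcop.isUnit_of_dvd' dvd_rfl hdvd)

theorem not_pow_four_dvd (h : IsNullTriple P Q R) {n : ℕ} (hn : n ≠ 0) (ha : a ≠ 0) :
    ¬R ^ 4 ∣ C a * P ^ n + C b * Q ^ n := by
  intro hdvd
  obtain ⟨i, E, H, -, rfl, rfl, hR, hEH, hE0, hH0⟩ := h.exists_factors
  have hR4 : R ^ 4 = H ^ 2 * (4 * E) ^ 2 := by linear_combination (R ^ 2 - 4 * E * H) * hR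
  have hR4' : R ^ 4 = E ^ 2 * (4 * H) ^ 2 := by linear_combination hR4
  have hH : IsUnit H := by
    refine isUnit_of_sq_dvd_add_pow_add_sub_pow (b := b * i ^ n) ha hn hEH hH0
      ((Dvd.intro _ hR4.symm).trans ?_)
    rwa [C_mul, C_pow, mul_assoc, ← mul_pow]
  have hE : IsUnit E := by
    refine isUnit_of_sq_dvd_add_pow_add_sub_pow (b := b * (-i) ^ n) ha hn hEH.symm hE0
      ((Dvd.intro _ hR4'.symm).trans ?_)
    rwa [C_mul, C_pow, mul_assoc, ← mul_pow, C_neg, neg_mul, ← mul_neg, neg_sub, add_comm H]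
  have hdeg := natDegree_add_le E H
  rw [natDegree_eq_zero_of_isUnit hE, natDegree_eq_zero_of_isUnit hH] at hdeg
  exact h.natDegree_pos.not_ge hdeg

theorem not_pow_three_dvd (h : IsNullTriple P Q R) (ha : a ≠ 0) :
    ¬R ^ 3 ∣ C a * P ^ 2 + C b * Q ^ 2 := by
  rintro ⟨s, hs⟩
  have hR := h.rotate.rotate
  by_cases hab : a = b
  · subst hab
    have hRs : R * -s = C a :=
      mul_left_cancel₀ (pow_ne_zero 2 hR.ne_zero)
        (by linear_combination hs - C a * h.sq_add_sq_add_sq)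
    exact hR.not_isUnit (isUnit_of_dvd_unit (Dvd.intro _ hRs) (ha.isUnit.map C))
  · have hdvd : R ∣ C (a - b) * P ^ 2 := by
      refine ⟨R ^ 2 * s + C b * R, ?_⟩
      rw [C_sub]
      linear_combination hs - C b * h.sq_add_sq_add_sq
    exact hR.not_isUnit (isUnit_of_dvd_unit (hR.isCoprime.pow_right.dvd_of_dvd_mul_right hdvd)
      ((sub_ne_zero.mpr hab).isUnit.map C))

theorem isUnit_of_add_eq_sq_mul (h : IsNullTriple P Q R) (ha : a ≠ 0) {s : L[X]}
    (hs : C a * P + C b * Q = R ^ 2 * s) : IsUnit s := by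
  have hR := h.rotate.rotate
  have hab : C a ^ 2 + C b ^ 2 = (0 : L[X]) := by
    rw [← C_pow, ← C_pow, ← C_add, C_eq_zero]
    by_contra hab
    have hdvd : R ∣ C (a ^ 2 + b ^ 2) * Q ^ 2 := by
      refine ⟨-C a ^ 2 * R - R * s * (C a * P - C b * Q), ?_⟩
      simp only [C_add, C_pow]
      linear_combination C a ^ 2 * h.sq_add_sq_add_sq - (C a * P - C b * Q) * hs
    exact hR.not_isUnit (isUnit_of_dvd_unit
      (h.rotate.isCoprime.symm.pow_right.dvd_of_dvd_mul_right hdvd) (Ne.isUnit hab |>.map C))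
  have hsa : s * (C a * P - C b * Q) = -C a ^ 2 :=
    mul_left_cancel₀ (pow_ne_zero 2 hR.ne_zero) (by
      linear_combination C a ^ 2 * h.sq_add_sq_add_sq - (C a * P - C b * Q) * hs - Q ^ 2 * hab)
  exact isUnit_of_dvd_unit (Dvd.intro _ hsa) ((ha.isUnit.map C).pow 2).neg

theorem eq_one_and_eq_one_of_weighted_eq_zero (h : IsNullTriple P Q R) (ha : a ≠ 0) {x k : ℕ}
    (hx : 0 < x) (hk : k ≠ 0)
    (he : C a * P ^ x + C b * Q ^ x + C c * w ^ k * R ^ (x + k) = 0) : x = 1 ∧ k = 1 := by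
  obtain ⟨d, rfl⟩ := Nat.exists_eq_add_one_of_ne_zero hk
  have hdvd : R ^ (x + 1) ∣ C a * P ^ x + C b * Q ^ x :=
    ⟨-(C c * w ^ (d + 1) * R ^ d), by linear_combination he⟩
  obtain rfl | rfl | hx3 : x = 1 ∨ x = 2 ∨ 3 ≤ x := by omega
  · have hunit := h.isUnit_of_add_eq_sq_mul ha (b := b) (s := -(C c * w ^ (d + 1) * R ^ d))
      (by linear_combination he)
    have hd : d = 0 := by
      by_contra hd
      rw [IsUnit.neg_iff, IsUnit.mul_iff, isUnit_pow_iff hd] at hunit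
      exact h.rotate.rotate.not_isUnit hunit.2
    exact ⟨rfl, by rw [hd]⟩
  · exact absurd hdvd (h.not_pow_three_dvd ha)
  · exact absurd ((pow_dvd_pow R (by omega)).trans hdvd) (h.not_pow_four_dvd hx.ne' ha)

theorem add_mul_add_sq_ne_zero (h : IsNullTriple P Q R) (ha : a ≠ 0) (hb : b ≠ 0) :
    C a * P + w * (C b * Q ^ 2 + C c * R ^ 2) ≠ 0 := by
  intro he
  by_cases hbc : b = c
  · subst hbc
    have hPa : P * (C b * w) = C a :=
      mul_left_cancel₀ h.ne_zero (by linear_combination w * C b * h.sq_add_sq_add_sq - he)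
    exact h.not_isUnit (isUnit_of_dvd_unit (Dvd.intro _ hPa) (ha.isUnit.map C))
  · have hdvd : C b * Q ^ 2 + C c * R ^ 2 ∣ P :=
      (ha.isUnit.map C).dvd_mul_left.mp ⟨-w, by linear_combination he⟩
    have hcop : IsCoprime P (C b * Q ^ 2 + C c * R ^ 2) := by
      have hQ : IsCoprime P (C (b - c) * Q ^ 2) :=
        (isCoprime_mul_unit_left_right ((sub_ne_zero.mpr hbc).isUnit.map C) _ _).mpr
          h.isCoprime.pow_right
      have hsum := hQ.add_mul_left_right (-(C c * P))
      rwa [show C (b - c) * Q ^ 2 + P * -(C c * P) = C b * Q ^ 2 + C c * R ^ 2 by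
        rw [C_sub]; linear_combination -C c * h.sq_add_sq_add_sq] at hsum
    exact h.swap.natDegree_pos.ne' (natDegree_eq_zero_of_isUnit_C_mul_sq_add_C_mul_sq hb
      (hcop.isUnit_of_dvd' hdvd dvd_rfl))

theorem add_mul_ne_zero_of_natDegree_lt (h : IsNullTriple P Q R) (hw : w ≠ 0) (ha : a ≠ 0)
    (hb : b ≠ 0) (hc : c ≠ 0) (hQP : Q.natDegree = P.natDegree) (hRP : R.natDegree < P.natDegree)
    {k : ℕ} (hk : k ≠ 0) :
    C a * P + w * (C b * Q ^ 2 + C c * w ^ k * R ^ (k + 2)) ≠ 0 := by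
  intro he
  obtain ⟨j, rfl⟩ := Nat.exists_eq_add_one_of_ne_zero hk
  have hR := h.rotate.rotate
  have hdegw := two_mul_natDegree_eq_of_weighted_eq_zero h.natDegree_pos hQP hR.ne_zero hw
    ha hb hc he
  obtain ⟨i, E, H, hi, hP, hQ, hEH, hcop, hE0, hH0⟩ := h.exists_factors
  wlog hE : P.natDegree ≤ E.natDegree generalizing i E H
  · have hmax := natDegree_add_le E H
    refine this (-i) H E (by rw [neg_sq, hi]) (by rw [hP, add_comm]) ?_ ?_ hcop.symm hH0 hE0 ?_
    · rw [hQ, C_neg]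
      ring
    · rw [hEH]
      ring
    · rw [← hP] at hmax
      omega
  have hQ2 : Q ^ 2 = -(E - H) ^ 2 := by
    rw [hQ, mul_pow, ← C_pow, hi, C_neg, C_1, neg_one_mul]
  rw [hP, hQ2] at he
  have hdegEH : 2 * R.natDegree = E.natDegree + H.natDegree := by
    rw [← natDegree_pow, hEH, natDegree_neg, ← C_ofNat, mul_assoc,
      natDegree_C_mul (OfNat.ofNat_ne_zero 4), natDegree_mul hE0 hH0]
  have hlt : w.natDegree + H.natDegree < E.natDegree := by
    have := hR.natDegree_pos
    nlinarith
  have hdvd : E ∣ C a - C b * (w * H) := hcop.dvd_of_dvd_mul_left (y := H)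
    ⟨-C a + C b * w * (E - 2 * H) + 4 * C c * w ^ (j + 2) * R ^ (j + 1) * H, by
      linear_combination he - C c * w ^ (j + 2) * R ^ (j + 1) * hEH⟩
  have hbwH : C a - C b * (w * H) = 0 := eq_zero_of_dvd_of_natDegree_lt hdvd <|
    (natDegree_sub_le _ _).trans_lt <| by
      rw [natDegree_C, natDegree_C_mul hb, natDegree_mul hw hH0]
      omega
  exact hR.not_isUnit (isUnit_of_sq_eq_neg_four_mul ha hR.ne_zero hEH (v := C b * w)
    (s := -(C c * w ^ (j + 2) * R ^ j)) (by linear_combination -hbwH) (by linear_combination he))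

theorem not_lt_of_weighted_eq_zero (h : IsNullTriple P Q R) (hw : w ≠ 0) (ha : a ≠ 0)
    (hb : b ≠ 0) (hc : c ≠ 0) {x m k : ℕ} (hx : 0 < x) (hm : m ≠ 0) :
    C a * P ^ x + w ^ m * (C b * Q ^ (x + m) + C c * w ^ k * R ^ (x + m + k)) ≠ 0 := by
  intro he
  have hQ := h.rotate
  have hR := hQ.rotate
  obtain ⟨hQlt, hRlt⟩ := mul_natDegree_lt_of_weighted_eq_zero h.isCoprime h.ne_zero
    hQ.natDegree_pos hR.ne_zero hw ha hb hc (by omega) hm he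
  have hPmax := h.natDegree_le_max
  have hQmax := hQ.natDegree_le_max
  have hRmax := hR.natDegree_le_max
  have hxm : x + m ≤ 2 := by
    by_contra hxm
    have hQ3 : 3 * Q.natDegree ≤ (x + m) * Q.natDegree := Nat.mul_le_mul_right _ (by omega)
    have hR3 : 3 * R.natDegree ≤ (x + m + k) * R.natDegree := Nat.mul_le_mul_right _ (by omega)
    omega
  obtain ⟨rfl, rfl⟩ : x = 1 ∧ m = 1 := by omega
  rw [pow_one, pow_one, show 1 + 1 + k = k + 2 by ring] at he
  by_cases hk : k = 0
  · subst hk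
    exact h.add_mul_add_sq_ne_zero ha hb (w := w) (c := c) (by linear_combination he)
  · have hR3 : 3 * R.natDegree ≤ (1 + 1 + k) * R.natDegree := Nat.mul_le_mul_right _ (by omega)
    exact h.add_mul_ne_zero_of_natDegree_lt hw ha hb hc (by omega) (by omega) hk he

theorem exponents_of_le (h : IsNullTriple P Q R) (hw : w ≠ 0) (ha : a ≠ 0) (hb : b ≠ 0)
    (hc : c ≠ 0) {x y z : ℕ} (hx : 0 < x) (hxy : x ≤ y) (hyz : y ≤ z)
    (he : C a * (w * P) ^ x + C b * (w * Q) ^ y + C c * (w * R) ^ z = 0) :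
    x = y ∧ y = z ∧ z ≤ 2 ∨ x + y + z = 4 := by
  obtain ⟨m, rfl⟩ := Nat.exists_eq_add_of_le hxy
  obtain ⟨k, rfl⟩ := Nat.exists_eq_add_of_le hyz
  have hred := weighted_eq_zero_of_mul_pow_eq_zero hw he
  obtain hm | rfl := ne_or_eq m 0
  · exact absurd hred (h.not_lt_of_weighted_eq_zero hw ha hb hc hx hm)
  simp only [add_zero, pow_zero, one_mul] at hred
  obtain hk | rfl := ne_or_eq k 0
  · obtain ⟨rfl, rfl⟩ := h.eq_one_and_eq_one_of_weighted_eq_zero (b := b) (c := c) (w := w) ha hx hk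
      (by linear_combination hred)
    exact Or.inr rfl
  refine Or.inl ⟨rfl, rfl, ?_⟩
  by_contra hx2
  rw [not_le, add_zero, add_zero] at hx2
  have hineq : x * x + x * x + x * x ≤ x * x * x := by nlinarith
  have hdeg := Polynomial.flt_catalan hx.ne' hx.ne' hx.ne' hineq (Nat.cast_ne_zero.mpr hx.ne')
    (Nat.cast_ne_zero.mpr hx.ne') (Nat.cast_ne_zero.mpr hx.ne') h.ne_zero h.rotate.ne_zero
    h.rotate.rotate.ne_zero h.isCoprime ha hb hc (by linear_combination hred)
  exact h.natDegree_pos.ne' hdeg.1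

theorem exponents (h : IsNullTriple P Q R) (hw : w ≠ 0) (ha : a ≠ 0) (hb : b ≠ 0)
    (hc : c ≠ 0) {x y z : ℕ} (hx : 0 < x) (hy : 0 < y) (hz : 0 < z)
    (he : C a * (w * P) ^ x + C b * (w * Q) ^ y + C c * (w * R) ^ z = 0) :
    x = y ∧ y = z ∧ z ≤ 2 ∨ x + y + z = 4 := by
  rcases le_total x y with hxy | hyx <;> rcases le_total y z with hyz | hzy <;>
    rcases le_total x z with hxz | hzx
  · exact h.exponents_of_le hw ha hb hc hx hxy hyz he
  · exact h.exponents_of_le hw ha hb hc hx hxy hyz he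
  · have := h.rotate.rotate.swap.exponents_of_le hw ha hc hb hx hxz hzy (by linear_combination he)
    omega
  · have := h.rotate.rotate.exponents_of_le hw hc ha hb hz hzx hxy (by linear_combination he)
    omega
  · have := h.swap.exponents_of_le hw hb ha hc hy hyx hxz (by linear_combination he)
    omega
  · have := h.rotate.exponents_of_le hw hb hc ha hy hyz hzx (by linear_combination he)
    omega
  all_goals
  · have := h.rotate.swap.exponents_of_le hw hc hb ha hz hzy hyx (by linear_combination he)
    omega

end IsNullTriple

section Pythagorean

variable {L : Type*} [Field L] [CharZero L] {f g : L[X]}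

theorem isNullTriple_of_isCoprime {i : L} (hi : i ^ 2 = -1) (hf : 0 < f.natDegree) (hg : g ≠ 0)
    (hfg : IsCoprime f g) : IsNullTriple (2 * f * g) (f ^ 2 - g ^ 2) (C i * (f ^ 2 + g ^ 2)) where
  sq_add_sq_add_sq := by
    rw [mul_pow (C i), ← C_pow, hi, C_neg, C_1]
    ring
  isCoprime := isCoprime_two_mul_mul_sq_sub_sq (by
    rw [← C_ofNat]
    exact two_ne_zero.isUnit.map C) hfg
  natDegree_pos := by
    rw [mul_assoc, ← C_ofNat, natDegree_C_mul two_ne_zero,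
      natDegree_mul (ne_zero_of_natDegree_gt hf) hg]
    exact Nat.add_pos_left hf _

variable [IsAlgClosed L]

theorem not_sq_add_sq_dvd (hf : 0 < f.natDegree) (hg : g ≠ 0) (hfg : IsCoprime f g) :
    ¬f ^ 2 + g ^ 2 ∣ f ^ 2 - g ^ 2 + 2 * f * g := by
  obtain ⟨i, hi⟩ := IsAlgClosed.exists_pow_nat_eq (-1 : L) two_pos
  have hi0 : i ≠ 0 := by
    rintro rfl
    norm_num at hi
  rw [add_comm (f ^ 2 - g ^ 2), ← (hi0.isUnit.map C).mul_left_dvd]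
  exact (isNullTriple_of_isCoprime hi hf hg hfg).not_dvd_add

theorem exponents_of_pow_add_pow_eq_pow {w : L[X]} {x y z : ℕ} (hf : 0 < f.natDegree)
    (hg : g ≠ 0) (hfg : IsCoprime f g) (hw : w ≠ 0) (hx : 0 < x) (hy : 0 < y) (hz : 0 < z)
    (he : (w * (f ^ 2 - g ^ 2)) ^ x + (w * (2 * f * g)) ^ y = (w * (f ^ 2 + g ^ 2)) ^ z) :
    x = y ∧ y = z ∧ z ≤ 2 ∨ x + y + z = 4 := by
  obtain ⟨i, hi⟩ := IsAlgClosed.exists_pow_nat_eq (-1 : L) two_pos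
  have hi0 : i ≠ 0 := by
    rintro rfl
    norm_num at hi
  have hz' : C (-i⁻¹ ^ z) * (w * (C i * (f ^ 2 + g ^ 2))) ^ z = -(w * (f ^ 2 + g ^ 2)) ^ z := by
    rw [C_neg, C_pow, neg_mul, ← mul_pow, mul_left_comm w, ← mul_assoc, ← C_mul,
      inv_mul_cancel₀ hi0, C_1, one_mul]
  exact (isNullTriple_of_isCoprime hi hf hg hfg).swap.exponents hw one_ne_zero one_ne_zero
    (neg_ne_zero.mpr (pow_ne_zero z (inv_ne_zero hi0))) hx hy hz
    (by rw [hz', C_1]; linear_combination he)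

theorem pow_add_pow_eq_pow_iff_of_isAlgClosed {w : L[X]} {x y z : ℕ} (hf : 0 < f.natDegree)
    (hg : g ≠ 0) (hfg : IsCoprime f g) (hw : w ≠ 0) (hx : 0 < x) (hy : 0 < y) (hz : 0 < z) :
    (w * (f ^ 2 - g ^ 2)) ^ x + (w * (2 * f * g)) ^ y = (w * (f ^ 2 + g ^ 2)) ^ z ↔
      (x = 2 ∧ y = 2 ∧ z = 2) ∨ (x = 2 ∧ y = 1 ∧ z = 1 ∧ w * (f + g) ^ 2 = 1) := by
  have hf_unit : ¬IsUnit f := not_isUnit_of_natDegree_pos f hf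
  have hsub : f - g ≠ 0 := fun h => hf_unit <| isCoprime_self.mp <| by
    rwa [← sub_eq_zero.mp h] at hfg
  refine ⟨fun he => ?_, ?_⟩
  · obtain ⟨rfl, rfl, rfl⟩ | h222 | ⟨rfl, rfl, rfl⟩ | ⟨rfl, rfl, rfl⟩ | ⟨rfl, rfl, rfl⟩ :
        (x = 1 ∧ y = 1 ∧ z = 1) ∨ (x = 2 ∧ y = 2 ∧ z = 2) ∨ (x = 2 ∧ y = 1 ∧ z = 1) ∨
          (x = 1 ∧ y = 2 ∧ z = 1) ∨ (x = 1 ∧ y = 1 ∧ z = 2) := by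
      have := exponents_of_pow_add_pow_eq_pow hf hg hfg hw hx hy hz he
      omega
    · have h0 : w * 2 * g * (f - g) = 0 := by linear_combination he
      exact absurd h0 (mul_ne_zero (mul_ne_zero (mul_ne_zero hw two_ne_zero) hg) hsub)
    · exact Or.inl h222
    · exact Or.inr ⟨rfl, rfl, rfl, mul_left_cancel₀ (mul_ne_zero hw (pow_ne_zero 2 hsub))
        (by linear_combination he)⟩
    · have h1 : f * (2 * w * f) = 1 :=
        mul_left_cancel₀ (mul_ne_zero (mul_ne_zero hw two_ne_zero) (pow_ne_zero 2 hg))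
          (by linear_combination he)
      exact absurd (IsUnit.of_mul_eq_one _ h1) hf_unit
    · exact absurd ⟨w * (f ^ 2 + g ^ 2), mul_left_cancel₀ hw (by linear_combination he)⟩
        (not_sq_add_sq_dvd hf hg hfg)
  · rintro (⟨rfl, rfl, rfl⟩ | ⟨rfl, rfl, rfl, h⟩)
    · ring
    · linear_combination w * (f - g) ^ 2 * h

end Pythagorean

theorem jesmanowicz_poly_main_general {R : Type*} [CommRing R] [IsDomain R] [CharZero R]
    {f g w : R[X]} (hf : 0 < f.natDegree) (hg : g ≠ 0) (hfg : IsCoprime f g) (hw : w ≠ 0)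
    {x y z : ℕ} (hx : 0 < x) (hy : 0 < y) (hz : 0 < z) :
    (w * (f ^ 2 - g ^ 2)) ^ x + (w * (2 * f * g)) ^ y = (w * (f ^ 2 + g ^ 2)) ^ z ↔
      (x = 2 ∧ y = 2 ∧ z = 2) ∨
        (x = 2 ∧ y = 1 ∧ z = 1 ∧ w.natDegree = 0 ∧ w * (f + g) ^ 2 = 1) := by
  let φ : R →+* AlgebraicClosure (FractionRing R) :=
    (algebraMap (FractionRing R) _).comp (algebraMap R _)
  have hφ : Function.Injective φ :=
    (algebraMap (FractionRing R) _).injective.comp (IsFractionRing.injective R _)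
  have hmap : Function.Injective (mapRingHom φ) := map_injective φ hφ
  have hw_deg (h : w * (f + g) ^ 2 = 1) : w.natDegree = 0 :=
    natDegree_eq_zero_of_isUnit (IsUnit.of_mul_eq_one _ h)
  have key := pow_add_pow_eq_pow_iff_of_isAlgClosed
    ((natDegree_map_eq_of_injective hφ f).symm ▸ hf) ((map_ne_zero_iff _ hmap).mpr hg)
    (hfg.map (mapRingHom φ)) ((map_ne_zero_iff _ hmap).mpr hw) hx hy hz
  rw [← hmap.eq_iff, and_iff_right_of_imp hw_deg, ← hmap.eq_iff (a := w * (f + g) ^ 2)]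
  simpa only [map_add, map_sub, map_mul, map_pow, map_ofNat, map_one] using key

theorem jesmanowicz_poly_main
    {K : Type*} [Field K] [CharZero K]
    (f g w : K[X])
    (hf : 0 < f.natDegree) (hg : 0 < g.natDegree)
    (hfg : IsCoprime f g) (hw : w ≠ 0) :
    ∀ x y z : ℕ, 0 < x → 0 < y → 0 < z →
      ((w * (f ^ 2 - g ^ 2)) ^ x + (w * (2 * f * g)) ^ y = (w * (f ^ 2 + g ^ 2)) ^ z ↔
        ((x = 2 ∧ y = 2 ∧ z = 2) ∨
          (x = 2 ∧ y = 1 ∧ z = 1 ∧ w.natDegree = 0 ∧ w * (f + g) ^ 2 = 1))) :=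
  fun _ _ _ hx hy hz =>
    jesmanowicz_poly_main_general hf (ne_zero_of_natDegree_gt hg) hfg hw hx hy hz
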